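/- arXiv:1504.02077 — 7 statements merged into one kernel-verified Lean document; each statement's English description precedes it below -/
import Mathlib

section
/- For α ∈ [0,1], the two-qubit state ρ_α = (1/2)·[[α,0,0,α],[0,1−α,0,0],[0,0,1−α,0],[α,0,0,α]] (a 4×4 matrix indexed by (Fin 2 × Fin 2) in the ordered product basis |00⟩,|01⟩,|10⟩,|11⟩) is separable if and only if α ≤ 1/2. -/
/-! If `ρ_α = ∑ p_k A_k ⊗ B_k`, then positivity of the `2 × 2` factors gives
`2 Re (A₀₁ B₀₁) ≤ A₀₀ B₁₁ + A₁₁ B₀₀` for each `k`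
(`two_re_offDiag_mul_le`: `|A₀₁|² ≤ A₀₀ A₁₁`, `|B₀₁|² ≤ B₀₀ B₁₁`, then AM-GM), so the same
inequality holds for the average: `2 · α/2 ≤ (1-α)/2 + (1-α)/2`, that is `α ≤ 1/2`.

Conversely, averaging `|φ_z⟩⟨φ_z| ⊗ |φ_z̄⟩⟨φ_z̄|` with `φ_z = (1, z)/√2` over the fourth roots of
unity `z` kills every phase except those of `|00⟩⟨11|` and `|11⟩⟨00|`, and so gives `ρ_{1/2}`.
For `α ≤ 1/2` one has `ρ_α = 2α ρ_{1/2} + (1 - 2α) ρ_0`, and `ρ_0` is diagonal. -/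

open Matrix Kronecker
open scoped ComplexOrder

noncomputable section

/-- A density matrix: positive semidefinite with trace 1. -/
def IsDensity {n : Type*} [Fintype n] [DecidableEq n] (ρ : Matrix n n ℂ) : Prop :=
  ρ.PosSemidef ∧ ρ.trace = 1

/-- A rank-one projector: Hermitian, idempotent, trace 1. -/
def IsRankOneProj {n : Type*} [Fintype n] [DecidableEq n] (P : Matrix n n ℂ) : Prop :=
  P.IsHermitian ∧ P * P = P ∧ P.trace = 1

/-- Separability of a bipartite density matrix: a finite convex combination of
Kronecker products of density matrices. -/
def IsSeparableState {α β : Type*} [Fintype α] [DecidableEq α] [Fintype β] [DecidableEq β]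
    (ρ : Matrix (α × β) (α × β) ℂ) : Prop :=
  ∃ (K : ℕ) (p : Fin K → ℝ) (A : Fin K → Matrix α α ℂ) (B : Fin K → Matrix β β ℂ),
    (∀ k, 0 ≤ p k) ∧ (∑ k, p k) = 1 ∧ (∀ k, IsDensity (A k)) ∧ (∀ k, IsDensity (B k)) ∧
    ρ = ∑ k, (p k : ℂ) • (A k ⊗ₖ B k)

/-- Classical-quantum (with respect to the first factor): a mixture of
`Π_m ⊗ₖ ρ_m` with `{Π_m}` a complete family of pairwise orthogonal rank-one
projectors on the first factor and `ρ_m` density matrices on the second. -/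
def IsCQ {α β : Type*} [Fintype α] [DecidableEq α] [Fintype β] [DecidableEq β]
    (σ : Matrix (α × β) (α × β) ℂ) : Prop :=
  ∃ (P : α → Matrix α α ℂ) (q : α → ℝ) (ρ : α → Matrix β β ℂ),
    (∀ m, IsRankOneProj (P m)) ∧ (∀ m m', m ≠ m' → P m * P m' = 0) ∧
    (∑ m, P m) = 1 ∧ (∀ m, 0 ≤ q m) ∧ (∑ m, q m) = 1 ∧ (∀ m, IsDensity (ρ m)) ∧
    σ = ∑ m, (q m : ℂ) • (P m ⊗ₖ ρ m)

/-- Identification of the two-qubit index set with Fin 4, in the ordered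
product basis |00⟩,|01⟩,|10⟩,|11⟩. -/
def e2 : Fin 2 × Fin 2 ≃ Fin 4 := finProdFinEquiv.trans (finCongr (by norm_num))

/-- The family ρ_α of two-qubit states. -/
def rhoAlpha (α : ℝ) : Matrix (Fin 2 × Fin 2) (Fin 2 × Fin 2) ℂ :=
  ((1/2 : ℂ) • !![(α : ℂ), 0, 0, (α : ℂ);
                  0, 1 - (α : ℂ), 0, 0;
                  0, 0, 1 - (α : ℂ), 0;
                  (α : ℂ), 0, 0, (α : ℂ)]).submatrix e2 e2

/-- The last conjunct is nonnegativity of the determinant, since `A 1 0` is conjugate to `A 0 1`. -/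
lemma posSemidef_fin_two_bounds {A : Matrix (Fin 2) (Fin 2) ℂ} (hA : A.PosSemidef) :
    0 ≤ (A 0 0).re ∧ (A 0 0).im = 0 ∧ 0 ≤ (A 1 1).re ∧ (A 1 1).im = 0 ∧
      ‖A 0 1‖ ^ 2 ≤ (A 0 0).re * (A 1 1).re := by
  have h0 := Complex.nonneg_iff.1 (hA.diag_nonneg (i := 0))
  have h1 := Complex.nonneg_iff.1 (hA.diag_nonneg (i := 1))
  have hd := (Complex.nonneg_iff.1 hA.det_nonneg).1
  have h10 : A 1 0 = star (A 0 1) := (hA.isHermitian.apply 1 0).symm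
  rw [Matrix.det_fin_two, h10] at hd
  refine ⟨h0.1, h0.2.symm, h1.1, h1.2.symm, ?_⟩
  rw [Complex.sq_norm, Complex.normSq_apply]
  simp [← h0.2] at hd
  linarith

/-- The inequality violated by `ρ_α` for `α > 1/2`: on product states, the coherence
`|00⟩⟨11|` is dominated by the populations of `|01⟩` and `|10⟩`. -/
lemma two_re_offDiag_mul_le {A B : Matrix (Fin 2) (Fin 2) ℂ}
    (hA : A.PosSemidef) (hB : B.PosSemidef) :
    2 * (A 0 1 * B 0 1).re ≤ (A 0 0 * B 1 1).re + (A 1 1 * B 0 0).re := by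
  obtain ⟨a0, a0', a1, a1', ha⟩ := posSemidef_fin_two_bounds hA
  obtain ⟨b0, b0', b1, b1', hb⟩ := posSemidef_fin_two_bounds hB
  have hre : (A 0 1 * B 0 1).re ≤ ‖A 0 1‖ * ‖B 0 1‖ :=
    (Complex.re_le_norm _).trans (norm_mul _ _).le
  have hprod := mul_le_mul ha hb (by positivity) (by positivity)
  have hx := mul_nonneg a0 b1
  have hy := mul_nonneg a1 b0
  have key : 2 * (‖A 0 1‖ * ‖B 0 1‖) ≤ (A 0 0).re * (B 1 1).re + (A 1 1).re * (B 0 0).re := by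
    refine abs_le_of_sq_le_sq' ?_ (by positivity) |>.2
    nlinarith [sq_nonneg ((A 0 0).re * (B 1 1).re - (A 1 1).re * (B 0 0).re)]
  simp only [Complex.mul_re, a0', a1', zero_mul, sub_zero] at hre ⊢
  linarith

/-- The projector onto `(1, z)/√2`, for `z` of modulus one. -/
def phaseState (z : ℂ) : Matrix (Fin 2) (Fin 2) ℂ := !![1/2, star z / 2; z / 2, 1/2]

lemma isDensity_phaseState {z : ℂ} (hz : z * star z = 1) : IsDensity (phaseState z) := by
  constructor
  · have h := (Matrix.posSemidef_vecMulVec_self_star ![(1 : ℂ), z]).smul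
      (show (0 : ℝ) ≤ 1 / 2 by norm_num)
    convert h using 1
    clear h
    ext i j
    fin_cases i <;> fin_cases j <;>
      simp_all [phaseState, Matrix.smul_apply, -Matrix.cons_vecMulVec, Matrix.vecMulVec_apply] <;> ring
  · simp [phaseState, Matrix.trace_fin_two]
    norm_num

lemma isDensity_diag_one_zero : IsDensity (!![1, 0; 0, 0] : Matrix (Fin 2) (Fin 2) ℂ) := by
  constructor
  · convert Matrix.posSemidef_vecMulVec_self_star ![(1 : ℂ), 0] using 1
    ext i j
    fin_cases i <;> fin_cases j <;> simp [Matrix.vecMulVec_apply]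
  · simp [Matrix.trace_fin_two]

lemma isDensity_diag_zero_one : IsDensity (!![0, 0; 0, 1] : Matrix (Fin 2) (Fin 2) ℂ) := by
  constructor
  · convert Matrix.posSemidef_vecMulVec_self_star ![(0 : ℂ), 1] using 1
    ext i j
    fin_cases i <;> fin_cases j <;> simp [Matrix.vecMulVec_apply]
  · simp [Matrix.trace_fin_two]

lemma e2_zero_zero : e2 (0, 0) = 0 := by decide
lemma e2_zero_one : e2 (0, 1) = 1 := by decide
lemma e2_one_zero : e2 (1, 0) = 2 := by decide
lemma e2_one_one : e2 (1, 1) = 3 := by decide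

/-- for α ∈ [0,1], ρ_α is separable iff α ≤ 1/2. -/
theorem rhoAlpha_separable_iff (α : ℝ) (h0 : 0 ≤ α) (h1 : α ≤ 1) :
    IsSeparableState (rhoAlpha α) ↔ α ≤ 1/2 := by
  constructor
  · rintro ⟨K, p, A, B, hp, -, hA, hB, hρ⟩
    have entry (i j k l : Fin 2) : (rhoAlpha α (i, j) (k, l)).re
        = ∑ m, p m * (A m i k * B m j l).re := by
      rw [hρ, Matrix.sum_apply, Complex.re_sum]
      simp only [Matrix.smul_apply, Matrix.kroneckerMap_apply, smul_eq_mul, Complex.re_ofReal_mul]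
    have hsum : 2 * ∑ m, p m * (A m 0 1 * B m 0 1).re ≤
        ∑ m, p m * (A m 0 0 * B m 1 1).re + ∑ m, p m * (A m 1 1 * B m 0 0).re := by
      rw [Finset.mul_sum, ← Finset.sum_add_distrib]
      refine Finset.sum_le_sum fun m _ => ?_
      have := mul_le_mul_of_nonneg_left (two_re_offDiag_mul_le (hA m).1 (hB m).1) (hp m)
      linarith
    rw [← entry 0 0 1 1, ← entry 0 1 0 1, ← entry 1 0 1 0] at hsum
    simp [rhoAlpha, e2_zero_zero, e2_zero_one, e2_one_zero, e2_one_one] at hsum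
    linarith
  · intro h
    refine ⟨6, ![α/2, α/2, α/2, α/2, (1 - 2*α)/2, (1 - 2*α)/2],
      ![phaseState 1, phaseState Complex.I, phaseState (-1), phaseState (-Complex.I),
        !![1, 0; 0, 0], !![0, 0; 0, 1]],
      ![phaseState 1, phaseState (-Complex.I), phaseState (-1), phaseState Complex.I,
        !![0, 0; 0, 1], !![1, 0; 0, 0]], ?_, ?_, ?_, ?_, ?_⟩
    · intro k
      fin_cases k <;> simp <;> linarith
    · simp [Fin.sum_univ_succ]
      ring
    · intro k
      fin_cases k
      exacts [isDensity_phaseState (by simp), isDensity_phaseState (by simp),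
        isDensity_phaseState (by simp), isDensity_phaseState (by simp),
        isDensity_diag_one_zero, isDensity_diag_zero_one]
    · intro k
      fin_cases k
      exacts [isDensity_phaseState (by simp), isDensity_phaseState (by simp),
        isDensity_phaseState (by simp), isDensity_phaseState (by simp),
        isDensity_diag_zero_one, isDensity_diag_one_zero]
    · ext ⟨i, j⟩ ⟨k, l⟩
      fin_cases i <;> fin_cases j <;> fin_cases k <;> fin_cases l <;>
        simp [Fin.sum_univ_succ, phaseState, rhoAlpha, e2_zero_zero, e2_zero_one, e2_one_zero,
          e2_one_one] <;> ring_nf <;> simp <;> ring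
end
end

section
/- Let ρ_max^{ℓ=3} = (1/4)·[[1,0,0,1],[0,1,0,0],[0,0,1,0],[1,0,0,1]] and let P₀ = [[1,0],[0,0]], P₁ = [[0,0],[0,1]], P₊ = (1/2)[[1,1],[1,1]], P₋ = (1/2)[[1,−1],[−1,1]]. Then there exist 2×2 unitary matrices U and V such that (U⊗ₖV) · ρ_max^{ℓ=3} · (U⊗ₖV)† = (1/4)(P₀⊗ₖP₀ + P₁⊗ₖP₁ + P₊⊗ₖP₊ + P₋⊗ₖP₋). -/
/-!
In Pauli form `4 ρ = 1 + (X ⊗ X - Y ⊗ Y) / 2`, while the mixture is `(1 + (X ⊗ X + Z ⊗ Z) / 2) / 4`.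
So it suffices that `U` fixes `X` and sends `Y` to `Z`, and that `V` fixes `X` and sends `Y` to `-Z`:
these are the quarter turns about the `X` axis in opposite directions, `(1 ∓ i X) / √2`.
The phases `(1 ± i) / √2` remove the square root from the entries, and then `V` is the entrywise
conjugate of `U`; the identities are checked entry by entry.
-/

open Matrix Kronecker

noncomputable section

def P0 : Matrix (Fin 2) (Fin 2) ℂ := !![1, 0; 0, 0]
def P1 : Matrix (Fin 2) (Fin 2) ℂ := !![0, 0; 0, 1]
def Pplus : Matrix (Fin 2) (Fin 2) ℂ := (1/2 : ℂ) • !![1, 1; 1, 1]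
def Pminus : Matrix (Fin 2) (Fin 2) ℂ := (1/2 : ℂ) • !![1, -1; -1, 1]

/-- ρ_max^{ℓ=3}, the maximally discordant separable two-qubit state of length 3. -/
def rhoMax3 : Matrix (Fin 2 × Fin 2) (Fin 2 × Fin 2) ℂ :=
  ((1/4 : ℂ) • !![1, 0, 0, 1; 0, 1, 0, 0; 0, 0, 1, 0; 1, 0, 0, 1]).submatrix e2 e2

/-- The quarter turn about the `X` axis, times the phase `(1 + i) / √2`. -/
def quarterTurn : Matrix (Fin 2) (Fin 2) ℂ :=
  (1/2 : ℂ) • !![1 + Complex.I, 1 - Complex.I; 1 - Complex.I, 1 + Complex.I]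

/-- The opposite quarter turn about the `X` axis, times the phase `(1 - i) / √2`. -/
def quarterTurnInv : Matrix (Fin 2) (Fin 2) ℂ :=
  (1/2 : ℂ) • !![1 - Complex.I, 1 + Complex.I; 1 + Complex.I, 1 - Complex.I]

lemma quarterTurn_mem : quarterTurn ∈ Matrix.unitaryGroup (Fin 2) ℂ := by
  rw [Matrix.mem_unitaryGroup_iff]
  ext i j
  fin_cases i <;> fin_cases j <;>
    simp [quarterTurn, Matrix.mul_apply, Fin.sum_univ_two, Matrix.star_apply] <;>
    ring_nf <;> norm_num [Complex.I_sq, map_ofNat (starRingEnd ℂ) 2]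

lemma quarterTurnInv_mem : quarterTurnInv ∈ Matrix.unitaryGroup (Fin 2) ℂ := by
  rw [Matrix.mem_unitaryGroup_iff]
  ext i j
  fin_cases i <;> fin_cases j <;>
    simp [quarterTurnInv, Matrix.mul_apply, Fin.sum_univ_two, Matrix.star_apply] <;>
    ring_nf <;> norm_num [Complex.I_sq, map_ofNat (starRingEnd ℂ) 2]

/-- ρ_max^{ℓ=3} is locally unitarily equivalent to the uniform
mixture of the four projector products built from two MUBs. -/
theorem rhoMax3_locally_equiv_two_mub_mixture :
    ∃ U V : Matrix (Fin 2) (Fin 2) ℂ,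
      U ∈ Matrix.unitaryGroup (Fin 2) ℂ ∧ V ∈ Matrix.unitaryGroup (Fin 2) ℂ ∧
      (U ⊗ₖ V) * rhoMax3 * (U ⊗ₖ V)ᴴ =
        (1/4 : ℂ) • (P0 ⊗ₖ P0 + P1 ⊗ₖ P1 + Pplus ⊗ₖ Pplus + Pminus ⊗ₖ Pminus) := by
  refine ⟨quarterTurn, quarterTurnInv, quarterTurn_mem, quarterTurnInv_mem, ?_⟩
  have h00 : e2 (0, 0) = 0 := by decide
  have h01 : e2 (0, 1) = 1 := by decide
  have h10 : e2 (1, 0) = 2 := by decide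
  have h11 : e2 (1, 1) = 3 := by decide
  have h3 : Complex.I ^ 3 = -Complex.I := Complex.I_pow_three
  have h4 : Complex.I ^ 4 = 1 := Complex.I_pow_four
  ext ⟨i, j⟩ ⟨k, l⟩
  fin_cases i <;> fin_cases j <;> fin_cases k <;> fin_cases l <;>
    simp [quarterTurn, quarterTurnInv, rhoMax3, P0, P1, Pplus, Pminus, Matrix.mul_apply,
      Fintype.sum_prod_type, Fin.sum_univ_two, h00, h01, h10, h11] <;>
    ring_nf <;> norm_num [Complex.I_sq, map_ofNat (starRingEnd ℂ) 2, h3, h4]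
end
end

section
/- Let θ* = arccos(−1/3), and define the unit vectors |z₁⟩ = (1,0) and |z_k⟩ = (cos(θ*/2), e^{iφ_k} sin(θ*/2)) = (√(1/3), e^{iφ_k}√(2/3)) for k = 2,3,4 with φ₂ = 0, φ₃ = 2π/3, φ₄ = 4π/3, and let Z_k = |z_k⟩⟨z_k| be the corresponding rank-one projectors on ℂ². Then (1/4)(Z₁⊗ₖZ₁ + Z₂⊗ₖZ₂ + Z₃⊗ₖZ₃ + Z₄⊗ₖZ₄) = ρ̃_max, where ρ̃_max = (1/6)·[[2,0,0,0],[0,1,1,0],[0,1,1,0],[0,0,0,2]]. -/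
/-!
Write `ω = exp (2πi/3)`. The entry of `Z ⊗ₖ Z` at `((a, b), (c, d))` is `z a * z b * conj (z c * z d)`.
Summed over `z2, z3, z4`, it is a power of `√(1/3)` times a power of `√(2/3)` times the sum
`1 + ω ^ m + ω ^ (2 * m)` with `m = a + b - c - d`, which is `3` if `m = 0` and vanishes for
`m = ±1, ±2`. So only entries with `a + b = c + d` survive, and `z1` contributes to the `|00⟩⟨00|`
entry alone. Everything follows from `1 + ω + ω ^ 2 = 0` and `conj ω = ω ^ 2`.
-/


open Matrix Kronecker

noncomputable section

/-- Rank-one projector |z⟩⟨z| onto a vector z ∈ ℂ². -/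
def proj (z : Fin 2 → ℂ) : Matrix (Fin 2) (Fin 2) ℂ :=
  Matrix.vecMulVec z (star z)

/-- The four tetrahedral (SIC) states on the Bloch sphere. -/
def z1 : Fin 2 → ℂ := ![1, 0]
def z2 : Fin 2 → ℂ :=
  ![(Real.sqrt (1/3) : ℂ), Complex.exp (0 * Complex.I) * (Real.sqrt (2/3) : ℂ)]
def z3 : Fin 2 → ℂ :=
  ![(Real.sqrt (1/3) : ℂ), Complex.exp ((2 * Real.pi / 3) * Complex.I) * (Real.sqrt (2/3) : ℂ)]
def z4 : Fin 2 → ℂ :=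
  ![(Real.sqrt (1/3) : ℂ), Complex.exp ((4 * Real.pi / 3) * Complex.I) * (Real.sqrt (2/3) : ℂ)]

/-- ρ̃_max, locally unitarily equivalent to the maximally discordant separable
two-qubit state ρ_max^{ℓ=4}. -/
def rhoTildeMax : Matrix (Fin 2 × Fin 2) (Fin 2 × Fin 2) ℂ :=
  ((1/6 : ℂ) • !![2, 0, 0, 0; 0, 1, 1, 0; 0, 1, 1, 0; 0, 0, 0, 2]).submatrix e2 e2

/-- The cube root of unity `exp (2πi/3)`, the relative phase of `z3`. -/
def omega : ℂ := Complex.exp ((2 * Real.pi / 3) * Complex.I)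

lemma exp_four_pi_third : Complex.exp ((4 * Real.pi / 3) * Complex.I) = omega ^ 2 := by
  rw [omega, ← Complex.exp_nat_mul]
  congr 1
  push_cast
  ring

lemma omega_isPrimitiveRoot : IsPrimitiveRoot omega 3 := by
  have h := Complex.isPrimitiveRoot_exp 3 (by norm_num)
  have e : omega = Complex.exp (2 * Real.pi * Complex.I / (3 : ℕ)) := by
    rw [omega]
    congr 1
    push_cast
    ring
  rwa [e]

lemma one_add_omega_add_sq : 1 + omega + omega ^ 2 = 0 := by
  have h := omega_isPrimitiveRoot.geom_sum_eq_zero (by norm_num)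
  simpa [Finset.sum_range_succ] using h

lemma conj_omega : (starRingEnd ℂ) omega = omega ^ 2 := by
  have h3 : omega ^ 3 = 1 := omega_isPrimitiveRoot.pow_eq_one
  have hn : (starRingEnd ℂ) omega * omega = 1 := by
    rw [mul_comm, Complex.mul_conj, Complex.normSq_eq_norm_sq,
      omega_isPrimitiveRoot.norm'_eq_one (by norm_num)]
    norm_num
  linear_combination omega ^ 2 * hn - (starRingEnd ℂ) omega * h3

/-- the uniform mixture of the four tetrahedral projector
products equals ρ̃_max. -/
theorem tetrahedral_decomposition :
    (1/4 : ℂ) • (proj z1 ⊗ₖ proj z1 + proj z2 ⊗ₖ proj z2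
      + proj z3 ⊗ₖ proj z3 + proj z4 ⊗ₖ proj z4) = rhoTildeMax := by
  have hw := one_add_omega_add_sq
  have hs : ((Real.sqrt (1/3) : ℝ) : ℂ) ^ 2 = 1/3 := by
    rw [← Complex.ofReal_pow, Real.sq_sqrt (by norm_num)]
    norm_num
  have ht : ((Real.sqrt (2/3) : ℝ) : ℂ) ^ 2 = 2/3 := by
    rw [← Complex.ofReal_pow, Real.sq_sqrt (by norm_num)]
    norm_num
  have h2 : z2 = ![((Real.sqrt (1/3) : ℝ) : ℂ), ((Real.sqrt (2/3) : ℝ) : ℂ)] := by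
    simp [z2]
  have h3 : z3 = ![((Real.sqrt (1/3) : ℝ) : ℂ), omega * ((Real.sqrt (2/3) : ℝ) : ℂ)] := rfl
  have h4 : z4 = ![((Real.sqrt (1/3) : ℝ) : ℂ), omega ^ 2 * ((Real.sqrt (2/3) : ℝ) : ℂ)] := by
    rw [z4, exp_four_pi_third]
  have e00 : e2 (0, 0) = 0 := rfl
  have e01 : e2 (0, 1) = 1 := rfl
  have e10 : e2 (1, 0) = 2 := rfl
  have e11 : e2 (1, 1) = 3 := rfl
  rw [h2, h3, h4]
  -- Only the squares of the two moduli matter from here on.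
  generalize hsg : Real.sqrt (1/3) = s at *
  generalize htg : Real.sqrt (2/3) = t at *
  ext ⟨a, b⟩ ⟨c, d⟩
  simp only [rhoTildeMax, proj, Matrix.smul_apply, Matrix.add_apply, Matrix.kroneckerMap_apply,
    Matrix.vecMulVec_apply, Matrix.submatrix_apply, Pi.star_apply]
  fin_cases a <;> fin_cases b <;> fin_cases c <;> fin_cases d <;>
    simp [z1, e00, e01, e10, e11, conj_omega] <;>
    clear hsg htg h2 h3 h4 e00 e01 e10 e11 <;>
    grind
end
end

section
/- Let d ≥ 1 and let Z₁,…,Z_{d²} be complex d×d matrices, each a rank-one projector (Hermitian, idempotent, trace 1), satisfying tr(Z_k Z_{k'}) = 1/(d+1) for all k ≠ k'. Then the matrices Z₁,…,Z_{d²} are linearly independent over ℂ; in particular they span the full matrix space of d×d complex matrices. -/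
/-!
Pairing a vanishing combination `∑ g k • Z k = 0` with `Z j` under the trace form gives
`g j * d / (d + 1) + (∑ g k) / (d + 1) = 0`, since the Gram matrix has diagonal entries `1` and
off-diagonal entries `1 / (d + 1)`. Taking the plain trace gives `∑ g k = 0`, as each `Z k` has
trace one; hence `g j = 0`. Spanning follows because there are `d ^ 2` matrices, the dimension of
the whole matrix space.
-/

open Matrix

noncomputable section

/-- the d² rank-one projectors of a SIC-POVM in ℂ^d (pairwise
Hilbert–Schmidt overlap 1/(d+1)) are linearly independent, and hence span the
full space of d×d complex matrices. -/
theorem SIC_projectors_linearly_independent (d : ℕ) (hd : 1 ≤ d)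
    (Z : Fin (d^2) → Matrix (Fin d) (Fin d) ℂ)
    (hherm : ∀ k, (Z k).IsHermitian)
    (hidem : ∀ k, Z k * Z k = Z k)
    (htr : ∀ k, (Z k).trace = 1)
    (hover : ∀ k k', k ≠ k' → (Z k * Z k').trace = 1 / ((d : ℂ) + 1)) :
    LinearIndependent ℂ Z ∧
    Submodule.span ℂ (Set.range Z) = (⊤ : Submodule ℂ (Matrix (Fin d) (Fin d) ℂ)) := by
  have hd0 : (d : ℂ) ≠ 0 := by exact_mod_cast (by omega : d ≠ 0)
  have hd1 : (d : ℂ) + 1 ≠ 0 := by exact_mod_cast Nat.succ_ne_zero d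
  have hli : LinearIndependent ℂ Z := by
    rw [Fintype.linearIndependent_iff]
    intro g hg j
    have hsum : ∑ k, g k = 0 := by
      simpa [Matrix.trace_sum, Matrix.trace_smul, htr] using congrArg Matrix.trace hg
    have hpair : ∑ k, g k * (Z k * Z j).trace = 0 := by
      simpa [Finset.sum_mul, Matrix.trace_sum, Matrix.trace_smul] using
        congrArg (fun M => (M * Z j).trace) hg
    -- The Gram matrix is a multiple of the all-ones matrix plus a multiple of the identity.
    have hgram : ∀ k, g k * (Z k * Z j).trace
        = g k * (1 / ((d : ℂ) + 1)) + if k = j then g k * (d / ((d : ℂ) + 1)) else 0 := by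
      intro k
      split_ifs with h
      · subst h
        rw [hidem, htr]
        field_simp
        ring
      · rw [hover k j h, add_zero]
    rw [Finset.sum_congr rfl fun k _ => hgram k, Finset.sum_add_distrib, ← Finset.sum_mul, hsum,
      Finset.sum_ite_eq' Finset.univ j] at hpair
    simpa [hd0, hd1] using hpair
  refine ⟨hli, hli.span_eq_top_of_card_eq_finrank' ?_⟩
  simp [Module.finrank_matrix, sq]
end
end

section
/- The two-qubit state ρ_max^{ℓ=2} = (1/2)(P₀⊗ₖP₀ + P₊⊗ₖP₁), where P₀ = [[1,0],[0,0]], P₁ = [[0,0],[0,1]], P₊ = (1/2)[[1,1],[1,1]], is separable (being an equal mixture of two product states) but is not classical-quantum: there do not exist a pair of orthogonal rank-one projectors Π₁, Π₂ on ℂ² with Π₁+Π₂ = I₂, weights q₁,q₂ ≥ 0 with q₁+q₂ = 1, and density matrices ρ₁, ρ₂ on ℂ² such that ρ_max^{ℓ=2} = q₁(Π₁⊗ₖρ₁) + q₂(Π₂⊗ₖρ₂). In particular, the set of classical-quantum states is not convex. -/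
/-! The matrix `rhoMax2` is by definition an equal mixture of two products of rank-one projectors,
and a rank-one projector is a density matrix (`IsRankOneProj.isDensity`), so it is separable.

For a classical-quantum state `∑ q_m (Π_m ⊗ₖ ρ_m)`, every block obtained by fixing the indices of
the second factor is a linear combination of the mutually orthogonal `Π_m`, so any two such blocks
commute (`IsCQ.commute_sndBlock`). The two diagonal blocks of `rhoMax2` are `P0 / 2` and
`Pplus / 2`, which do not commute. -/

open Matrix Kronecker
open scoped ComplexOrder

noncomputable section

/-- ρ_max^{ℓ=2} = (1/2)(P₀⊗ₖP₀ + P₊⊗ₖP₁). -/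
def rhoMax2 : Matrix ((Fin 2) × (Fin 2)) ((Fin 2) × (Fin 2)) ℂ :=
  (1/2 : ℂ) • (P0 ⊗ₖ P0 + Pplus ⊗ₖ P1)

/-- The block of a bipartite matrix with the indices of the second factor fixed to `(j, j')`,
as a matrix on the first factor. -/
def sndBlock {α β : Type*} (σ : Matrix (α × β) (α × β) ℂ) (j j' : β) : Matrix α α ℂ :=
  σ.submatrix (fun i => (i, j)) (fun i => (i, j'))

lemma IsCQ.commute_sndBlock {α β : Type*} [Fintype α] [DecidableEq α] [Fintype β] [DecidableEq β]
    {σ : Matrix (α × β) (α × β) ℂ} (h : IsCQ σ) (j j' k k' : β) :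
    Commute (sndBlock σ j j') (sndBlock σ k k') := by
  obtain ⟨P, q, ρ, -, horth, -, -, -, -, rfl⟩ := h
  have hblock : ∀ a b : β, sndBlock (∑ m, (q m : ℂ) • (P m ⊗ₖ ρ m)) a b
      = ∑ m, ((q m : ℂ) * ρ m a b) • P m := by
    intro a b
    ext i i'
    simp only [sndBlock, submatrix_apply, Matrix.sum_apply, Matrix.smul_apply,
      kroneckerMap_apply, smul_eq_mul]
    exact Finset.sum_congr rfl fun m _ => by ring
  have hcomm : ∀ m m', Commute (P m) (P m') := by
    intro m m'
    by_cases hm : m = m'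
    · subst hm
      exact Commute.refl _
    · exact (horth m m' hm).trans (horth m' m (Ne.symm hm)).symm
  rw [hblock, hblock]
  exact Commute.sum_left _ _ _ fun m _ => Commute.sum_right _ _ _ fun m' _ =>
    ((hcomm m m').smul_left _).smul_right _

/-- A Hermitian idempotent `P` equals `Pᴴ * P`, hence is positive semidefinite. -/
lemma IsRankOneProj.isDensity {n : Type*} [Fintype n] [DecidableEq n] {P : Matrix n n ℂ}
    (h : IsRankOneProj P) : IsDensity P := by
  obtain ⟨hH, hI, hT⟩ := h
  refine ⟨?_, hT⟩
  have hps := posSemidef_conjTranspose_mul_self P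
  rwa [hH.eq, hI] at hps

lemma isRankOneProj_P0 : IsRankOneProj P0 := by
  refine ⟨?_, ?_, ?_⟩
  · ext i j; fin_cases i <;> fin_cases j <;> simp [P0]
  · ext i j; fin_cases i <;> fin_cases j <;> simp [P0]
  · simp [P0, trace_fin_two]

lemma isRankOneProj_P1 : IsRankOneProj P1 := by
  refine ⟨?_, ?_, ?_⟩
  · ext i j; fin_cases i <;> fin_cases j <;> simp [P1]
  · ext i j; fin_cases i <;> fin_cases j <;> simp [P1]
  · simp [P1, trace_fin_two]

lemma isRankOneProj_Pplus : IsRankOneProj Pplus := by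
  refine ⟨?_, ?_, ?_⟩
  · ext i j; fin_cases i <;> fin_cases j <;> simp [Pplus]
  · ext i j; fin_cases i <;> fin_cases j <;> norm_num [Pplus, mul_apply, Fin.sum_univ_two]
  · norm_num [Pplus, trace_fin_two]

lemma isSeparableState_rhoMax2 : IsSeparableState rhoMax2 := by
  refine ⟨2, fun _ => 1 / 2, ![P0, Pplus], ![P0, P1], fun _ => by norm_num, by norm_num,
    ?_, ?_, ?_⟩
  · simp [Fin.forall_fin_two, isRankOneProj_P0.isDensity, isRankOneProj_Pplus.isDensity]
  · simp [Fin.forall_fin_two, isRankOneProj_P0.isDensity, isRankOneProj_P1.isDensity]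
  · simp [rhoMax2, Fin.sum_univ_two]

lemma not_isCQ_rhoMax2 : ¬ IsCQ rhoMax2 := by
  intro h
  -- Off the diagonal, `P0 * Pplus` has the entry `1 / 2` in position `(0, 1)` and `Pplus * P0`
  -- has the entry `0` there.
  have h01 := congrFun (congrFun (h.commute_sndBlock 0 0 1 1).eq 0) 1
  norm_num [sndBlock, rhoMax2, P0, P1, Pplus, mul_apply, Fin.sum_univ_two] at h01

/-- ρ_max^{ℓ=2} is separable but not classical-quantum;
in particular the set of classical-quantum states is not convex. -/
theorem rhoMax2_separable_not_CQ :
    IsSeparableState rhoMax2 ∧ ¬ IsCQ rhoMax2 := by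
  exact ⟨isSeparableState_rhoMax2, not_isCQ_rhoMax2⟩
end
end

section
/- There exists a classical-quantum state σ on (ℂ²⊗ℂ³)⊗ℂ² — i.e. a density matrix indexed by ((Fin 2 × Fin 3) × Fin 2), classical with respect to the six-dimensional factor ℂ²⊗ℂ³ — whose partial trace over the qutrit ancilla ℂ³ equals the maximally discordant separable two-qubit state ρ_max^{ℓ=4} = (1/6)·[[1,0,0,1],[0,2,0,0],[0,0,2,0],[1,0,0,1]]. This improves on the Li–Luo construction, which for this state (of length 4) requires an ancilla of dimension 4. -/
/-!
In Bloch form the state is `¼ (1 + ⅓ (X ⊗ X - Y ⊗ Y - Z ⊗ Z))`, which is the uniform mixture of the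
six product states `p ⊗ p'` in which `p` runs over the eigenprojectors of the three Pauli matrices
and `p'` is the eigenprojector of the same Pauli matrix for the same eigenvalue (`X`) or the
opposite one (`Y`, `Z`). The six projectors `p` fall into three orthogonal pairs, one per axis, so a
qutrit that records the axis already makes them orthogonal: the projectors `p ⊗ |k⟩⟨k|`, with `p` an
eigenprojector of the `k`-th Pauli matrix, are a complete orthogonal family on `ℂ² ⊗ ℂ³`
(`extProj_rankOne`, `extProj_orthogonal`, `extProj_sum`). Mixing `p ⊗ |k⟩⟨k| ⊗ p'` uniformly gives
the extension, and tracing out the qutrit forgets the axis label (`partialTrace_extState`).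
-/

open Matrix Kronecker
open scoped ComplexOrder

noncomputable section

/-- ρ_max^{ℓ=4}, the maximally discordant separable two-qubit state. -/
def rhoMax4 : Matrix (Fin 2 × Fin 2) (Fin 2 × Fin 2) ℂ :=
  ((1/6 : ℂ) • !![1, 0, 0, 1; 0, 2, 0, 0; 0, 0, 2, 0; 1, 0, 0, 1]).submatrix e2 e2

/-- The Pauli matrices `X`, `Y`, `Z`, in this order. -/
def pauli : Fin 3 → Matrix (Fin 2) (Fin 2) ℂ :=
  ![!![0, 1; 1, 0], !![0, -Complex.I; Complex.I, 0], !![1, 0; 0, -1]]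

/-- The projector onto the eigenspace of `pauli k` for the eigenvalue `1` (`i = 0`) or `-1`
(`i = 1`). -/
def pauliProj (k : Fin 3) (i : Fin 2) : Matrix (Fin 2) (Fin 2) ℂ :=
  (1 / 2 : ℂ) • (1 + (![1, -1] i : ℂ) • pauli k)

/-- The sign pattern of the correlations: the second qubit carries the same eigenvalue as the first
along `X` and the opposite one along `Y` and `Z`. -/
def partner (k : Fin 3) (i : Fin 2) : Fin 2 := if k = 0 then i else 1 - i

/-- The orthogonal family on `ℂ² ⊗ ℂ³`: an eigenprojector of `pauli k`, with the axis `k` recorded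
in the qutrit. -/
def extProj (m : Fin 2 × Fin 3) : Matrix (Fin 2 × Fin 3) (Fin 2 × Fin 3) ℂ :=
  pauliProj m.2 m.1 ⊗ₖ Matrix.single m.2 m.2 1

/-- The classical-quantum extension: the uniform mixture over the family `extProj`. -/
def extState : Matrix ((Fin 2 × Fin 3) × Fin 2) ((Fin 2 × Fin 3) × Fin 2) ℂ :=
  ∑ m, (((1 / 6 : ℝ)) : ℂ) • (extProj m ⊗ₖ pauliProj m.2 (partner m.2 m.1))

lemma pauliProj_rankOne (k : Fin 3) (i : Fin 2) : IsRankOneProj (pauliProj k i) := by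
  refine ⟨?_, ?_, ?_⟩
  · ext a b
    fin_cases k <;> fin_cases i <;> fin_cases a <;> fin_cases b <;>
      simp [pauliProj, pauli] <;> ring
  · ext a b
    fin_cases k <;> fin_cases i <;> fin_cases a <;> fin_cases b <;>
      simp [pauliProj, pauli, Matrix.mul_apply, Fin.sum_univ_two] <;> ring_nf <;>
      simp <;> norm_num
  · fin_cases k <;> fin_cases i <;>
      simp [pauliProj, pauli, Matrix.trace, Fin.sum_univ_two] <;> norm_num

lemma pauliProj_orthogonal (k : Fin 3) {i j : Fin 2} (h : i ≠ j) :
    pauliProj k i * pauliProj k j = 0 := by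
  ext a b
  fin_cases k <;> fin_cases i <;> fin_cases j <;> first | exact absurd rfl h | skip
  all_goals
    fin_cases a <;> fin_cases b <;>
      simp [pauliProj, pauli, Matrix.mul_apply, Fin.sum_univ_two] <;> ring_nf <;>
      simp

lemma pauliProj_sum (k : Fin 3) : ∑ i, pauliProj k i = 1 := by
  simp only [Fin.sum_univ_two, pauliProj, ← smul_add]
  ext a b
  fin_cases a <;> fin_cases b <;> simp <;> ring

lemma IsCQ.isDensity {α β : Type*} [Fintype α] [DecidableEq α] [Fintype β] [DecidableEq β]
    {σ : Matrix (α × β) (α × β) ℂ} (h : IsCQ σ) : IsDensity σ := by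
  obtain ⟨P, q, ρ, hP, -, -, hq, hq1, hρ, rfl⟩ := h
  refine ⟨Matrix.posSemidef_sum _ fun m _ => ?_, ?_⟩
  · exact ((hP m).isDensity.1.kronecker (hρ m).1).smul (by exact_mod_cast hq m)
  · simp only [Matrix.trace_sum, Matrix.trace_smul, Matrix.trace_kronecker, (hP _).2.2, (hρ _).2,
      mul_one, smul_eq_mul]
    exact_mod_cast hq1

lemma extProj_rankOne (m : Fin 2 × Fin 3) : IsRankOneProj (extProj m) := by
  obtain ⟨hH, hI, hT⟩ := pauliProj_rankOne m.2 m.1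
  refine ⟨?_, ?_, ?_⟩
  · simp [Matrix.IsHermitian, extProj, Matrix.conjTranspose_kronecker, hH.eq]
  · simp [extProj, ← Matrix.mul_kronecker_mul, hI]
  · simp [extProj, Matrix.trace_kronecker, hT]

lemma extProj_orthogonal {m m' : Fin 2 × Fin 3} (h : m ≠ m') : extProj m * extProj m' = 0 := by
  obtain ⟨i, k⟩ := m
  obtain ⟨j, l⟩ := m'
  by_cases hkl : k = l
  · subst hkl
    have hij : i ≠ j := fun e => h (by rw [e])
    simp [extProj, ← Matrix.mul_kronecker_mul, pauliProj_orthogonal k hij]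
  · simp [extProj, ← Matrix.mul_kronecker_mul, Matrix.single_mul_single_of_ne, hkl]

lemma extProj_sum : ∑ m, extProj m = 1 := by
  have hrow (k : Fin 3) :
      ∑ i, extProj (i, k) = (1 : Matrix (Fin 2) (Fin 2) ℂ) ⊗ₖ Matrix.single k k (1 : ℂ) := by
    rw [← pauliProj_sum k]
    simp [extProj, Fin.sum_univ_two, Matrix.add_kronecker]
  rw [Fintype.sum_prod_type_right]
  simp only [hrow]
  ext ⟨a, b⟩ ⟨c, d⟩
  fin_cases b <;> fin_cases d <;>
    simp [Fin.sum_univ_three, Matrix.one_apply, Matrix.kroneckerMap_apply]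

lemma extState_isCQ : IsCQ extState :=
  ⟨extProj, fun _ => 1 / 6, fun m => pauliProj m.2 (partner m.2 m.1), extProj_rankOne,
    fun _ _ => extProj_orthogonal, extProj_sum, fun _ => by norm_num, by simp,
    fun _ => (pauliProj_rankOne _ _).isDensity, rfl⟩

/-- The qutrit factor of each summand has trace `1`, so it drops out under the partial trace. -/
lemma partialTrace_extState (p q : Fin 2 × Fin 2) :
    ∑ k : Fin 3, extState ((p.1, k), p.2) ((q.1, k), q.2) =
      ∑ k : Fin 3, ∑ i : Fin 2,
        (1 / 6 : ℂ) * (pauliProj k i p.1 q.1 * pauliProj k (partner k i) p.2 q.2) := by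
  simp [extState, extProj, Matrix.sum_apply, Fintype.sum_prod_type_right, Fin.sum_univ_three,
    Fin.sum_univ_two, Matrix.kroneckerMap_apply, Matrix.single_apply]

/-- Expansion of the state as the uniform mixture of six product states. -/
lemma pauliProj_mixture (p q : Fin 2 × Fin 2) :
    ∑ k : Fin 3, ∑ i : Fin 2,
        (1 / 6 : ℂ) * (pauliProj k i p.1 q.1 * pauliProj k (partner k i) p.2 q.2) =
      rhoMax4 p q := by
  obtain ⟨a, b⟩ := p
  obtain ⟨c, d⟩ := q
  have e00 : e2 (0, 0) = 0 := rfl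
  have e01 : e2 (0, 1) = 1 := rfl
  have e10 : e2 (1, 0) = 2 := rfl
  have e11 : e2 (1, 1) = 3 := rfl
  fin_cases a <;> fin_cases b <;> fin_cases c <;> fin_cases d <;>
    simp [rhoMax4, e00, e01, e10, e11, Fin.sum_univ_three, Fin.sum_univ_two, pauliProj, pauli,
      partner] <;> ring_nf <;> simp <;> norm_num

/-- there is a classical-quantum state on (ℂ²⊗ℂ³)⊗ℂ² whose
reduction over the qutrit ancilla is the maximally discordant separable
two-qubit state ρ_max^{ℓ=4} (improving on the Li–Luo construction, which
needs an ancilla of dimension 4). -/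
theorem rhoMax4_has_qutrit_classical_extension :
    ∃ σ : Matrix ((Fin 2 × Fin 3) × Fin 2) ((Fin 2 × Fin 3) × Fin 2) ℂ,
      IsDensity σ ∧ IsCQ σ ∧
      (Matrix.of fun p q : Fin 2 × Fin 2 =>
        ∑ k : Fin 3, σ ((p.1, k), p.2) ((q.1, k), q.2)) = rhoMax4 := by
  refine ⟨extState, extState_isCQ.isDensity, extState_isCQ, ?_⟩
  ext p q
  exact (partialTrace_extState p q).trans (pauliProj_mixture p q)
end
end

section
/- There exists a classical-quantum state σ on (ℂ²⊗ℂ²)⊗ℂ² — i.e. a density matrix indexed by ((Fin 2 × Fin 2) × Fin 2), classical with respect to the four-dimensional factor ℂ²⊗ℂ² — whose partial trace over the qubit ancilla equals ρ_max^{ℓ=3} = (1/4)·[[1,0,0,1],[0,1,0,0],[0,0,1,0],[1,0,0,1]]. This improves on the Li–Luo construction, which for this state (of length 3) requires a qutrit ancilla. -/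
/-!
Expanding in Pauli matrices, `ρ_max^{ℓ=3} = (1/4) (I⊗I + (X⊗X - Y⊗Y)/2)`, which is the uniform
mixture of the four product states `A ⊗ Aᵀ` with `A` running over the eigenprojectors
`(1 ± X)/2`, `(1 ± Y)/2` of `X` and `Y` (note `Xᵀ = X` and `Yᵀ = -Y`).
The two eigenbases are not mutually orthogonal, but a single ancilla qubit that records which of
them is used suffices: `|±⟩|0⟩`, `|±i⟩|1⟩` is an orthonormal basis of `ℂ² ⊗ ℂ²`, and discarding the
ancilla leaves the four projectors `A`. Hence `σ = (1/4) ∑ (A ⊗ |k⟩⟨k|) ⊗ Aᵀ` is the required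
classical-quantum extension. That it is a density matrix holds for every state of
classical-quantum form (`IsCQ.isDensity`).
-/

open Matrix Kronecker
open scoped ComplexOrder

noncomputable section

lemma IsRankOneProj.kronecker {α β : Type*} [Fintype α] [DecidableEq α] [Fintype β]
    [DecidableEq β] {P : Matrix α α ℂ} {Q : Matrix β β ℂ} (hP : IsRankOneProj P)
    (hQ : IsRankOneProj Q) : IsRankOneProj (P ⊗ₖ Q) := by
  refine ⟨?_, ?_, ?_⟩
  · rw [Matrix.IsHermitian, Matrix.conjTranspose_kronecker, hP.1.eq, hQ.1.eq]
  · rw [← Matrix.mul_kronecker_mul, hP.2.1, hQ.2.1]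
  · rw [Matrix.trace_kronecker, hP.2.2, hQ.2.2, mul_one]

lemma isRankOneProj_single {n : Type*} [Fintype n] [DecidableEq n] (k : n) :
    IsRankOneProj (Matrix.single k k (1 : ℂ)) := by
  refine ⟨?_, ?_, ?_⟩ <;> simp [Matrix.IsHermitian]

/-- For `|u| = 1`, the projector onto the equatorial qubit state `(|0⟩ + u|1⟩)/√2`; the values
`u = ±1` and `u = ±i` give the eigenprojectors of the Pauli matrices `X` and `Y`. -/
def equator (u : ℂ) : Matrix (Fin 2) (Fin 2) ℂ := (1/2 : ℂ) • !![1, star u; u, 1]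

lemma isRankOneProj_equator {u : ℂ} (hu : u * star u = 1) : IsRankOneProj (equator u) := by
  have hu' : star u * u = 1 := by rw [mul_comm, hu]
  simp only [RCLike.star_def] at hu hu'
  refine ⟨?_, ?_, ?_⟩
  · ext i j
    fin_cases i <;> fin_cases j <;> simp [equator]
  · ext i j
    fin_cases i <;> fin_cases j <;> simp [equator, Matrix.mul_apply] <;>
      grind
  · simp [equator, Matrix.trace_fin_two]; norm_num

lemma equator_mul_equator_neg {u : ℂ} (hu : u * star u = 1) :
    equator u * equator (-u) = 0 := by
  have hu' : star u * u = 1 := by rw [mul_comm, hu]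
  simp only [RCLike.star_def] at hu hu'
  ext i j
  fin_cases i <;> fin_cases j <;> simp [equator, Matrix.mul_apply] <;> grind

lemma equator_transpose (u : ℂ) : (equator u)ᵀ = equator (star u) := by
  ext i j
  fin_cases i <;> fin_cases j <;> simp [equator]

/-- The phase of the `s`-th eigenvector of `X` (for `k = 0`) or of `Y` (for `k = 1`). -/
def phase (s k : Fin 2) : ℂ := (-1) ^ (s : ℕ) * Complex.I ^ (k : ℕ)

lemma phase_mul_star (s k : Fin 2) : phase s k * star (phase s k) = 1 := by
  fin_cases s <;> fin_cases k <;> simp [phase]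

lemma phase_eq_neg {s s' : Fin 2} (h : s ≠ s') (k : Fin 2) : phase s' k = -phase s k := by
  fin_cases s <;> fin_cases s' <;> simp [phase] at h ⊢

/-- The measurement basis of qubit and ancilla: the eigenprojectors of `X` or `Y` on the qubit,
the choice of observable being flagged by the ancilla state `|k⟩`. -/
def flagged (m : Fin 2 × Fin 2) : Matrix (Fin 2 × Fin 2) (Fin 2 × Fin 2) ℂ :=
  equator (phase m.1 m.2) ⊗ₖ Matrix.single m.2 m.2 1

lemma flagged_mul_flagged {m m' : Fin 2 × Fin 2} (h : m ≠ m') : flagged m * flagged m' = 0 := by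
  obtain ⟨s, k⟩ := m
  obtain ⟨s', k'⟩ := m'
  rw [flagged, flagged, ← Matrix.mul_kronecker_mul]
  by_cases hk : k = k'
  · subst hk
    have hs : s ≠ s' := fun hs => h (by rw [hs])
    simp only [phase_eq_neg hs, equator_mul_equator_neg (phase_mul_star s k),
      Matrix.zero_kronecker]
  · rw [Matrix.single_mul_single_of_ne (h := hk), Matrix.kronecker_zero]

lemma sum_flagged : ∑ m, flagged m = 1 := by
  ext ⟨i, k⟩ ⟨j, l⟩
  fin_cases i <;> fin_cases k <;> fin_cases j <;> fin_cases l <;>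
    simp [flagged, equator, phase, Fintype.sum_prod_type, Matrix.single] <;>
    norm_num

/-- there is a classical-quantum state on (ℂ²⊗ℂ²)⊗ℂ² whose
reduction over the qubit ancilla is ρ_max^{ℓ=3} (improving on the Li–Luo
construction, which needs a qutrit ancilla). -/
theorem rhoMax3_has_qubit_classical_extension :
    ∃ σ : Matrix ((Fin 2 × Fin 2) × Fin 2) ((Fin 2 × Fin 2) × Fin 2) ℂ,
      IsDensity σ ∧ IsCQ σ ∧
      (Matrix.of fun p q : Fin 2 × Fin 2 =>
        ∑ k : Fin 2, σ ((p.1, k), p.2) ((q.1, k), q.2)) = rhoMax3 := by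
  have hCQ : IsCQ (∑ m, ((1/4 : ℝ) : ℂ) • (flagged m ⊗ₖ (equator (phase m.1 m.2))ᵀ)) := by
    refine ⟨flagged, fun _ => 1/4, fun m => (equator (phase m.1 m.2))ᵀ, fun m => ?_,
      fun m m' => flagged_mul_flagged, sum_flagged, fun _ => by norm_num, by simp, fun m => ?_,
      rfl⟩
    · exact (isRankOneProj_equator (phase_mul_star _ _)).kronecker (isRankOneProj_single _)
    · simp only [equator_transpose]
      refine (isRankOneProj_equator ?_).isDensity
      rw [star_star, mul_comm, phase_mul_star]
  refine ⟨_, hCQ.isDensity, hCQ, ?_⟩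
  ext ⟨i, j⟩ ⟨i', j'⟩
  fin_cases i <;> fin_cases j <;> fin_cases i' <;> fin_cases j' <;>
    simp [flagged, equator, phase, Fintype.sum_prod_type, Matrix.single, Matrix.sum_apply,
      rhoMax3, e2, finProdFinEquiv] <;>
    ring_nf <;> norm_num
end
end
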